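/- arXiv:1802.05501 — 3 statements merged into one kernel-verified Lean document; each statement's English description precedes it below -/
import Mathlib

section
/- Let k be a positive integer, let G be a finite simple graph, let P = (X_1,…,X_l) be a path decomposition of G in which every bag X_i has size at most k, and let S be a subset of V(G). Then at most 2k of the S-branches are not in-branches with respect to P. -/
/-!
Let `p` be the largest index at which some vertex of `S` appears for the first time, and let `q` be
the smallest index at which some vertex of `S` appears for the last time. An `S`-branch `C` shares
a bag with every vertex of `S`, because `N(C) = S`. If some `v ∈ S` is missing from the first bag
meeting `C`, then `v` appears only later, so the first bag meeting `C` comes before `p`; on the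
other hand `C` shares a bag with the vertex first appearing at `p`, so `C` meets a bag at or
after `p`. The bags meeting the connected set `C` form an interval (`bag_convex`), hence `C` meets
`X p`. Symmetrically, if `S` is not contained in the last bag meeting `C`, then `C` meets `X q`.
Distinct branches are disjoint, so at most `k` of them meet any given bag
(`ncard_branches_meeting`); this bounds the number of branches that are not in-branches by `2k`.
-/

open SimpleGraph

variable {V : Type*}

/-- `N_G(Y)`: the set of vertices outside `Y` having a neighbor in `Y`. -/
def nbhdSet (G : SimpleGraph V) (Y : Set V) : Set V :=
  {v | v ∉ Y ∧ ∃ u ∈ Y, G.Adj u v}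

/-- `C` is a connected component of the subgraph of `G` induced by `U`. -/
def IsCompIn (G : SimpleGraph V) (U C : Set V) : Prop :=
  C.Nonempty ∧ C ⊆ U ∧ (G.induce C).Connected ∧
    ∀ u ∈ C, ∀ v ∈ U, G.Adj u v → v ∈ C

/-- `C` is a connected component of `G - S`. -/
def IsCompOf (G : SimpleGraph V) (S C : Set V) : Prop :=
  IsCompIn G Sᶜ C

/-- `C` is an `S`-branch: a connected component of `G - S` with `N_G(C) = S`. -/
def IsBranch (G : SimpleGraph V) (S C : Set V) : Prop :=
  IsCompOf G S C ∧ nbhdSet G C = S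

/-- `S` is a bottleneck (for the width parameter `k`): a nonempty set with
at least `2k+1` `S`-branches. -/
def IsBottleneck (G : SimpleGraph V) (k : ℕ) (S : Set V) : Prop :=
  S.Nonempty ∧ 2 * k + 1 ≤ {C : Set V | IsBranch G S C}.ncard

/-- `(X 0, …, X (l-1))` is a path decomposition of `G`. -/
def IsPathDecomp (G : SimpleGraph V) (l : ℕ) (X : ℕ → Set V) : Prop :=
  (∀ v, ∃ i < l, v ∈ X i) ∧
  (∀ u v, G.Adj u v → ∃ i < l, u ∈ X i ∧ v ∈ X i) ∧
  (∀ i j m, i ≤ j → j ≤ m → m < l → X i ∩ X m ⊆ X j)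

/-- The width of a path decomposition: the maximum bag size minus one. -/
noncomputable def pdWidth (l : ℕ) (X : ℕ → Set V) : ℕ :=
  ((Finset.range l).sup fun i => (X i).ncard) - 1

/-- The set of indices of bags meeting the vertex set `C`. -/
def supp (l : ℕ) (X : ℕ → Set V) (C : Set V) : Set ℕ :=
  {t | t < l ∧ (C ∩ X t).Nonempty}

/-- `a(C)`: the first index of a bag meeting `C`. -/
noncomputable def firstIdx (l : ℕ) (X : ℕ → Set V) (C : Set V) : ℕ :=
  sInf (supp l X C)

/-- `b(C)`: the last index of a bag meeting `C`. -/
noncomputable def lastIdx (l : ℕ) (X : ℕ → Set V) (C : Set V) : ℕ :=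
  sSup (supp l X C)

/-- `C` is an in-branch of `S` with respect to the decomposition:
an `S`-branch with `S ⊆ X (a C)` and `S ⊆ X (b C)`. -/
def IsInBranch (G : SimpleGraph V) (l : ℕ) (X : ℕ → Set V) (S C : Set V) : Prop :=
  IsBranch G S C ∧ S ⊆ X (firstIdx l X C) ∧ S ⊆ X (lastIdx l X C)

/-- `α(S)`: the minimum of `a(H)` over in-branches `H` of `S`. -/
noncomputable def botStart (G : SimpleGraph V) (l : ℕ) (X : ℕ → Set V) (S : Set V) : ℕ :=
  sInf {i | ∃ C, IsInBranch G l X S C ∧ i = firstIdx l X C}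

/-- `β(S)`: the maximum of `b(H)` over in-branches `H` of `S`. -/
noncomputable def botEnd (G : SimpleGraph V) (l : ℕ) (X : ℕ → Set V) (S : Set V) : ℕ :=
  sSup {i | ∃ C, IsInBranch G l X S C ∧ i = lastIdx l X C}

/-- The interval `I(S,P) = [α(S), β(S)]` of a bottleneck `S`. -/
noncomputable def botInterval (G : SimpleGraph V) (l : ℕ) (X : ℕ → Set V) (S : Set V) : Set ℕ :=
  Set.Icc (botStart G l X S) (botEnd G l X S)

/-- A pre-branch of `S`. -/
def IsPreBranch (G : SimpleGraph V) (l : ℕ) (X : ℕ → Set V) (S C : Set V) : Prop :=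
  IsBranch G S C ∧ ¬ IsInBranch G l X S C ∧ firstIdx l X C < botStart G l X S

/-- A post-branch of `S`. -/
def IsPostBranch (G : SimpleGraph V) (l : ℕ) (X : ℕ → Set V) (S C : Set V) : Prop :=
  IsBranch G S C ∧ ¬ IsInBranch G l X S C ∧
    botStart G l X S ≤ firstIdx l X C ∧ botEnd G l X S < lastIdx l X C

/-- `C` waits in the interval `[i, j]` of the decomposition. -/
def WaitsIn (X : ℕ → Set V) (C : Set V) (i j : ℕ) : Prop :=
  ∀ t, i ≤ t → t ≤ j → C ∩ X t = C ∩ X i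

/-- The decomposition is `S`-structured: every component of `G - S` that is not an
`S`-branch, and every pre- or post-branch of `S`, waits in `I(S,P)`. -/
def IsStructured (G : SimpleGraph V) (l : ℕ) (X : ℕ → Set V) (S : Set V) : Prop :=
  ∀ C : Set V,
    ((IsCompOf G S C ∧ ¬ IsBranch G S C) ∨ IsPreBranch G l X S C ∨ IsPostBranch G l X S C) →
    WaitsIn X C (botStart G l X S) (botEnd G l X S)

/-- The decomposition is `I`-connected: every connected component of the subgraph
induced by any prefix of bags contains a vertex of `I`. -/
def IsIConn (G : SimpleGraph V) (l : ℕ) (X : ℕ → Set V) (I : Set V) : Prop :=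
  ∀ i < l, ∀ C : Set V, IsCompIn G {v | ∃ j ≤ i, v ∈ X j} C → (C ∩ I).Nonempty

/-- A set `A` that meets a connected set `C` and is closed under adjacency inside `C`
contains `C`. -/
lemma subset_of_connected {G : SimpleGraph V} {C A : Set V} (hC : (G.induce C).Connected)
    {v : V} (hvC : v ∈ C) (hvA : v ∈ A)
    (hA : ∀ x ∈ C, ∀ y ∈ C, G.Adj x y → x ∈ A → y ∈ A) : C ⊆ A := by
  intro w hw
  obtain ⟨walk⟩ := hC.preconnected ⟨v, hvC⟩ ⟨w, hw⟩
  have key : ∀ (x y : C), (G.induce C).Walk x y → (x : V) ∈ A → (y : V) ∈ A := by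
    intro x y W
    induction W with
    | nil => exact id
    | cons h _ ih => exact fun hx => ih (hA _ (Subtype.prop _) _ (Subtype.prop _) h hx)
  exact key _ _ walk hvA

lemma IsCompIn.eq_of_mem {G : SimpleGraph V} {U C D : Set V} (hC : IsCompIn G U C)
    (hD : IsCompIn G U D) {v : V} (hvC : v ∈ C) (hvD : v ∈ D) : C = D :=
  Set.Subset.antisymm
    (subset_of_connected hC.2.2.1 hvC hvD
      fun x _ y hy hxy hx => hD.2.2.2 x hx y (hC.2.1 hy) hxy)
    (subset_of_connected hD.2.2.1 hvD hvC
      fun x _ y hy hxy hx => hC.2.2.2 x hx y (hD.2.1 hy) hxy)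

/-- The indices of bags meeting a connected set form an interval. -/
lemma bag_convex {G : SimpleGraph V} {l : ℕ} {X : ℕ → Set V} (hP : IsPathDecomp G l X)
    {C : Set V} (hC : (G.induce C).Connected) {i j m : ℕ} (hij : i ≤ j) (hjm : j ≤ m)
    (hi : i ∈ supp l X C) (hm : m ∈ supp l X C) : (C ∩ X j).Nonempty := by
  obtain ⟨-, u, huC, hui⟩ := hi
  obtain ⟨hml, w, hwC, hwm⟩ := hm
  by_contra hne
  have hno : ∀ x ∈ C, x ∉ X j := fun x hx hxj => hne ⟨x, hx, hxj⟩
  -- If `C` misses `X j`, the vertices of `C` occurring in a bag up to `j` are closed under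
  -- adjacency in `C`, since such a vertex occurs in no bag from `j` on.
  have hsub : C ⊆ {x | ∃ t ≤ j, x ∈ X t} := by
    refine subset_of_connected hC huC ⟨i, hij, hui⟩ ?_
    rintro x hx y hy hxy ⟨t, htj, hxt⟩
    obtain ⟨r, hr, hxr, hyr⟩ := hP.2.1 x y hxy
    rcases le_total r j with h | h
    · exact ⟨r, h, hyr⟩
    · exact absurd (hP.2.2 t j r htj h hr ⟨hxt, hxr⟩) (hno x hx)
  obtain ⟨t, htj, hwt⟩ := hsub hwC
  exact hno w hwC (hP.2.2 t j m htj hjm hml ⟨hwt, hwm⟩)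

/-- Branches are pairwise disjoint, so a bag meets at most as many of them as it has vertices. -/
lemma ncard_branches_meeting [Fintype V] (G : SimpleGraph V) (S B : Set V) :
    {C : Set V | IsBranch G S C ∧ (C ∩ B).Nonempty}.ncard ≤ B.ncard := by
  have hch : ∀ C : {C : Set V | IsBranch G S C ∧ (C ∩ B).Nonempty}, ∃ v, v ∈ C.1 ∩ B :=
    fun C => C.2.2
  choose f hf using hch
  rw [← Nat.card_coe_set_eq, ← Nat.card_coe_set_eq]
  refine Nat.card_le_card_of_injective (fun C => (⟨f C, (hf C).2⟩ : B)) ?_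
  intro C D hCD
  have hfCD : f C = f D := congrArg Subtype.val hCD
  exact Subtype.ext (C.2.1.1.eq_of_mem D.2.1.1 (hf C).1 (hfCD ▸ (hf D).1))

lemma supp_bddAbove (l : ℕ) (X : ℕ → Set V) (C : Set V) : BddAbove (supp l X C) :=
  ⟨l, fun _ ht => ht.1.le⟩

lemma firstIdx_mem {l : ℕ} {X : ℕ → Set V} {C : Set V} (h : (supp l X C).Nonempty) :
    firstIdx l X C ∈ supp l X C :=
  Nat.sInf_mem h

lemma lastIdx_mem {l : ℕ} {X : ℕ → Set V} {C : Set V} (h : (supp l X C).Nonempty) :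
    lastIdx l X C ∈ supp l X C :=
  Nat.sSup_mem h (supp_bddAbove l X C)

lemma firstIdx_le {l : ℕ} {X : ℕ → Set V} {C : Set V} {t : ℕ} (h : t ∈ supp l X C) :
    firstIdx l X C ≤ t :=
  Nat.sInf_le h

lemma le_lastIdx {l : ℕ} {X : ℕ → Set V} {C : Set V} {t : ℕ} (h : t ∈ supp l X C) :
    t ≤ lastIdx l X C :=
  le_csSup (supp_bddAbove l X C) h

lemma mem_supp_singleton {l : ℕ} {X : ℕ → Set V} {v : V} {t : ℕ} :
    t ∈ supp l X {v} ↔ t < l ∧ v ∈ X t := by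
  simp [supp]

lemma IsBranch.exists_common_bag {G : SimpleGraph V} {l : ℕ} {X : ℕ → Set V}
    (hP : IsPathDecomp G l X) {S C : Set V} (hC : IsBranch G S C) {v : V} (hv : v ∈ S) :
    ∃ t, t ∈ supp l X C ∧ t ∈ supp l X {v} := by
  rw [← hC.2] at hv
  obtain ⟨-, u, huC, huv⟩ := hv
  obtain ⟨t, ht, hut, hvt⟩ := hP.2.1 u v huv
  exact ⟨t, ⟨ht, u, huC, hut⟩, mem_supp_singleton.2 ⟨ht, hvt⟩⟩

/-- If the vertex `s` is the last one of `S` to appear, then a branch whose first bag does not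
contain `S` meets the bag in which `s` first appears. -/
lemma meets_of_first {G : SimpleGraph V} {l : ℕ} {X : ℕ → Set V} (hP : IsPathDecomp G l X)
    {S C : Set V} (hC : IsBranch G S C) {s : V} (hs : s ∈ S)
    (hmax : ∀ v ∈ S, firstIdx l X {v} ≤ firstIdx l X {s})
    (hn : ¬ S ⊆ X (firstIdx l X C)) : (C ∩ X (firstIdx l X {s})).Nonempty := by
  obtain ⟨v, hv, hvX⟩ := Set.not_subset.1 hn
  obtain ⟨t, htC, htv⟩ := hC.exists_common_bag hP hv
  obtain ⟨r, hrC, hrs⟩ := hC.exists_common_bag hP hs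
  have haC := firstIdx_mem ⟨t, htC⟩
  have hav := mem_supp_singleton.1 (firstIdx_mem ⟨t, htv⟩)
  have hlt : firstIdx l X C ≤ firstIdx l X {v} := by
    by_contra h
    exact hvX (hP.2.2 _ _ t (not_le.1 h).le (firstIdx_le htC) htC.1
      ⟨hav.2, (mem_supp_singleton.1 htv).2⟩)
  exact bag_convex hP hC.1.2.2.1 (hlt.trans (hmax v hv)) (firstIdx_le hrs) haC hrC

/-- The mirror image of `meets_of_first`. -/
lemma meets_of_last {G : SimpleGraph V} {l : ℕ} {X : ℕ → Set V} (hP : IsPathDecomp G l X)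
    {S C : Set V} (hC : IsBranch G S C) {s : V} (hs : s ∈ S)
    (hmin : ∀ v ∈ S, lastIdx l X {s} ≤ lastIdx l X {v})
    (hn : ¬ S ⊆ X (lastIdx l X C)) : (C ∩ X (lastIdx l X {s})).Nonempty := by
  obtain ⟨v, hv, hvX⟩ := Set.not_subset.1 hn
  obtain ⟨t, htC, htv⟩ := hC.exists_common_bag hP hv
  obtain ⟨r, hrC, hrs⟩ := hC.exists_common_bag hP hs
  have hbC := lastIdx_mem ⟨t, htC⟩
  have hbv := mem_supp_singleton.1 (lastIdx_mem ⟨t, htv⟩)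
  have hlt : lastIdx l X {v} ≤ lastIdx l X C := by
    by_contra h
    exact hvX (hP.2.2 t _ _ (le_lastIdx htC) (not_le.1 h).le hbv.1
      ⟨(mem_supp_singleton.1 htv).2, hbv.2⟩)
  exact bag_convex hP hC.1.2.2.1 (le_lastIdx hrs) ((hmin v hv).trans hlt) hrC hbC

/-- for a path decomposition with all bags of size at most `k`,
at most `2k` of the `S`-branches are not in-branches. -/
theorem stmt1 [Fintype V] (k : ℕ) (hk : 1 ≤ k) (G : SimpleGraph V) (l : ℕ)
    (X : ℕ → Set V) (hP : IsPathDecomp G l X) (hw : ∀ i < l, (X i).ncard ≤ k)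
    (S : Set V) :
    {C : Set V | IsBranch G S C ∧ ¬ IsInBranch G l X S C}.ncard ≤ 2 * k := by
  rcases S.eq_empty_or_nonempty with rfl | hS
  -- The empty set is contained in every bag, so all branches are in-branches.
  · have hempty : {C : Set V | IsBranch G ∅ C ∧ ¬ IsInBranch G l X ∅ C} = ∅ :=
      Set.eq_empty_of_forall_notMem fun C hC =>
        hC.2 ⟨hC.1, Set.empty_subset _, Set.empty_subset _⟩
    simp [hempty]
  obtain ⟨s, hs, hmax⟩ := S.exists_max_image (fun v => firstIdx l X {v}) S.toFinite hS
  obtain ⟨s', hs', hmin⟩ := S.exists_min_image (fun v => lastIdx l X {v}) S.toFinite hS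
  have hsupp : ∀ v : V, (supp l X {v}).Nonempty := fun v => by
    obtain ⟨i, hi, hvi⟩ := hP.1 v
    exact ⟨i, mem_supp_singleton.2 ⟨hi, hvi⟩⟩
  have hsub : {C : Set V | IsBranch G S C ∧ ¬ IsInBranch G l X S C} ⊆
      {C | IsBranch G S C ∧ (C ∩ X (firstIdx l X {s})).Nonempty} ∪
      {C | IsBranch G S C ∧ (C ∩ X (lastIdx l X {s'})).Nonempty} := by
    rintro C ⟨hC, hn⟩
    by_cases h : S ⊆ X (firstIdx l X C)
    · exact Or.inr ⟨hC, meets_of_last hP hC hs' hmin fun h' => hn ⟨hC, h, h'⟩⟩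
    · exact Or.inl ⟨hC, meets_of_first hP hC hs hmax h⟩
  have h₁ := (ncard_branches_meeting G S (X (firstIdx l X {s}))).trans
    (hw _ (firstIdx_mem (hsupp s)).1)
  have h₂ := (ncard_branches_meeting G S (X (lastIdx l X {s'}))).trans
    (hw _ (lastIdx_mem (hsupp s')).1)
  have h₃ := (Set.ncard_le_ncard hsub (Set.toFinite _)).trans (Set.ncard_union_le _ _)
  omega
end

section
/- Let k be a positive integer, let G be a finite simple graph, let P = (X_1,…,X_l) be a path decomposition of G in which every bag has size at most k, and let S ⊆ V(G) be a bottleneck, i.e., the number of S-branches is at least 2k+1. Then there exists an index i ∈ {1,…,l} with S ⊆ X_i. -/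
/-!
Let `b` be the least, over `s ∈ S`, of the last index of a bag containing `s`, attained at `s₀`.
Then `S ⊆ X b`. Indeed, if `t ∈ S` is not in `X b`, all bags containing `t` have index greater
than `b`, while all bags containing `s₀` have index at most `b`. Every `S`-branch is adjacent to
both `s₀` and `t`, so it meets bags on both sides of `b`, and by connectivity it meets `X b`
itself (`exists_mem_bag_of_connected`). The `S`-branches being pairwise disjoint
(`IsBranch.eq_of_mem`), there are at most `|X b| ≤ k` of them, which contradicts `2k + 1 ≤ k`.
-/

open SimpleGraph

variable {V : Type*}

/-- A predicate preserved along the edges inside a connected set holds on the whole set as soon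
as it holds at one vertex. -/
theorem forall_mem_of_connected_of_adj {G : SimpleGraph V} {C : Set V}
    (hC : (G.induce C).Connected) (p : V → Prop)
    (hstep : ∀ x ∈ C, ∀ y ∈ C, G.Adj x y → p x → p y)
    {u v : V} (hu : u ∈ C) (hv : v ∈ C) (hpu : p u) : p v := by
  obtain ⟨w⟩ := hC.preconnected ⟨u, hu⟩ ⟨v, hv⟩
  have key : ∀ {x y : C}, (G.induce C).Walk x y → p x → p y := by
    intro x y w
    induction w with
    | nil => exact id
    | cons h _ ih => exact fun hp => ih (hstep _ (Subtype.prop _) _ (Subtype.prop _) h hp)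
  exact key w hpu

/-- The bags met by a connected set form an interval. -/
theorem exists_mem_bag_of_connected {G : SimpleGraph V} {l : ℕ} {X : ℕ → Set V}
    (hP : IsPathDecomp G l X) {C : Set V} (hC : (G.induce C).Connected)
    {u v : V} (hu : u ∈ C) (hv : v ∈ C) {i b j : ℕ} (hui : u ∈ X i) (hvj : v ∈ X j)
    (hib : i ≤ b) (hbj : b ≤ j) (hj : j < l) : ∃ w ∈ C, w ∈ X b := by
  by_contra! hno
  obtain ⟨-, hedge, hint⟩ := hP
  -- If `C` avoids `X b`, lying only in bags before `b` propagates along the edges of `C`.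
  have hlt : ∀ m < l, v ∈ X m → m < b := by
    refine forall_mem_of_connected_of_adj hC (fun x => ∀ m < l, x ∈ X m → m < b)
      ?_ hu hv ?_
    · intro x _ y hy hxy hx m hm hym
      obtain ⟨n, hn, hxn, hyn⟩ := hedge x y hxy
      by_contra! hbm
      exact hno y hy (hint n b m (hx n hn hxn).le hbm hm ⟨hyn, hym⟩)
    · intro m hm hum
      by_contra! hbm
      exact hno u hu (hint i b m hib hbm hm ⟨hui, hum⟩)
  exact absurd (hlt j hj hvj) (by omega)

/-- Distinct `S`-branches are disjoint. -/
theorem IsBranch.eq_of_mem {G : SimpleGraph V} {S C D : Set V}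
    (hC : IsBranch G S C) (hD : IsBranch G S D) {w : V} (hwC : w ∈ C) (hwD : w ∈ D) :
    C = D := by
  have key : ∀ {A B : Set V}, IsBranch G S A → IsBranch G S B → w ∈ A → w ∈ B → A ⊆ B :=
    fun hA hB hwA hwB x hx =>
      forall_mem_of_connected_of_adj hA.1.2.2.1 (· ∈ _)
        (fun a _ c hc hac ha => hB.1.2.2.2 a ha c (hA.1.2.1 hc) hac) hwA hx hwB
  exact (key hC hD hwC hwD).antisymm (key hD hC hwD hwC)

/-- Every vertex lies in a bag of largest index. -/
theorem IsPathDecomp.exists_last {G : SimpleGraph V} {l : ℕ} {X : ℕ → Set V}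
    (hP : IsPathDecomp G l X) (v : V) :
    ∃ m, (m < l ∧ v ∈ X m) ∧ ∀ i < l, v ∈ X i → i ≤ m := by
  have hfin : {i | i < l ∧ v ∈ X i}.Finite := (Set.finite_lt_nat l).subset fun i hi => hi.1
  obtain ⟨m, hm, hmax⟩ := Set.exists_max_image _ id hfin (hP.1 v)
  exact ⟨m, hm, fun i hi hvi => hmax i ⟨hi, hvi⟩⟩

/-- for a path decomposition with bags of size at most `k` and a
bottleneck `S`, some bag contains all of `S`. -/
theorem stmt3 [Fintype V] (k : ℕ) (hk : 1 ≤ k) (G : SimpleGraph V) (l : ℕ)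
    (X : ℕ → Set V) (hP : IsPathDecomp G l X) (hw : ∀ i < l, (X i).ncard ≤ k)
    (S : Set V) (hS : IsBottleneck G k S) :
    ∃ i < l, S ⊆ X i := by
  obtain ⟨hSne, hcard⟩ := hS
  choose f hf hmax using hP.exists_last
  obtain ⟨s₀, hs₀, hmin⟩ := Set.exists_min_image S f S.toFinite hSne
  refine ⟨f s₀, (hf s₀).1, fun t ht => ?_⟩
  by_contra htb
  have hmeet : ∀ C ∈ {C : Set V | IsBranch G S C}, ∃ w ∈ C, w ∈ X (f s₀) := by
    intro C hC
    obtain ⟨-, u, huC, hus⟩ : s₀ ∈ nbhdSet G C := hC.2 ▸ hs₀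
    obtain ⟨-, v, hvC, hvt⟩ : t ∈ nbhdSet G C := hC.2 ▸ ht
    obtain ⟨i, hi, hui, hsi⟩ := hP.2.1 u s₀ hus
    obtain ⟨j, hj, hvj, htj⟩ := hP.2.1 v t hvt
    refine exists_mem_bag_of_connected hP hC.1.2.2.1 huC hvC hui hvj (hmax s₀ i hi hsi) ?_ hj
    -- A bag of `t` before `f s₀` would force `t ∈ X (f s₀)`, as the last bag of `t` is not before.
    by_contra! hlt
    exact htb (hP.2.2 j (f s₀) (f t) hlt.le (hmin t ht) (hf t).1 ⟨htj, (hf t).2⟩)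
  have : Nonempty V := ⟨s₀⟩
  choose! g hgC hgX using hmeet
  have hle : {C : Set V | IsBranch G S C}.ncard ≤ (X (f s₀)).ncard :=
    Set.ncard_le_ncard_of_injOn g hgX fun C hC D hD hCD =>
      IsBranch.eq_of_mem hC hD (hgC C hC) (hCD ▸ hgC D hD)
  have := hw (f s₀) (hf s₀).1
  omega
end

section
/- Let k be a positive integer, let G be a finite simple graph admitting a path decomposition in which every bag has size at most k, and let S and S' be bottlenecks of G with S' ⊄ S and S ⊄ S'. Let H be the unique connected component of G−S with S' ⊆ S ∪ V(H). Then there exists exactly one connected component C of G−S' such that (S ∖ S') ∪ ⋃_{H' an S-branch, H' ≠ H} V(H') ⊆ V(C); moreover, every S'-branch except possibly C is a subgraph of H. -/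
/-! An `S`-branch other than `H` is disjoint from `S' ⊆ S ∪ H`, and each vertex of `S` has a neighbour
in it. Hence all these branches are joined to one another through any vertex of `S \ S'`, and all of
`S \ S'` is joined through any one of these branches, which exists since `S` has at least three
branches. So they lie in a single component `C` of `G - S'`. An `S'`-branch `B ≠ C` misses `C ⊇ S \ S'`,
hence is a connected subset of `G - S`; it has a neighbour in `S' \ S ⊆ H`, so it meets `H` and therefore lies
in it. The two facts about components that carry the proof are
`exists_isCompIn` and `IsCompIn.subset_of_connected`. -/

open SimpleGraph

variable {V : Type*}

theorem IsCompIn.subset_of_connected {G : SimpleGraph V} {U F C : Set V} (hF : IsCompIn G U F)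
    (hCU : C ⊆ U) (hC : (G.induce C).Connected) (h : (C ∩ F).Nonempty) : C ⊆ F := by
  obtain ⟨x, hxC, hxF⟩ := h
  intro y hyC
  have hxy := hC.preconnected ⟨x, hxC⟩ ⟨y, hyC⟩
  rw [SimpleGraph.reachable_iff_reflTransGen] at hxy
  have key : ∀ z : C, Relation.ReflTransGen (G.induce C).Adj ⟨x, hxC⟩ z → (z : V) ∈ F := by
    intro z hz
    induction hz with
    | refl => exact hxF
    | @tail b c _ hbc ih => exact hF.2.2.2 b ih c (hCU c.2) hbc
  exact key _ hxy

theorem IsCompIn.eq_of_inter_nonempty {G : SimpleGraph V} {U F C : Set V} (hF : IsCompIn G U F)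
    (hC : IsCompIn G U C) (h : (C ∩ F).Nonempty) : C = F :=
  (hF.subset_of_connected hC.2.1 hC.2.2.1 h).antisymm
    (hC.subset_of_connected hF.2.1 hF.2.2.1 (Set.inter_comm C F ▸ h))

/-- Every vertex of `U` lies in a component: the union of all connected subsets of `U` through it. -/
theorem exists_isCompIn (G : SimpleGraph V) {U : Set V} {v : V} (hv : v ∈ U) :
    ∃ C, IsCompIn G U C ∧ v ∈ C := by
  set T : Set (Set V) := {t | v ∈ t ∧ t ⊆ U ∧ (G.induce t).Connected} with hT
  have hvT : {v} ∈ T := by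
    refine ⟨rfl, by simpa using hv, ?_⟩
    have : Nonempty ({v} : Set V) := ⟨⟨v, rfl⟩⟩
    exact ⟨SimpleGraph.Preconnected.of_subsingleton⟩
  have hvC : v ∈ ⋃₀ T := ⟨{v}, hvT, rfl⟩
  have hsub : ⋃₀ T ⊆ U := Set.sUnion_subset fun t ht => ht.2.1
  have hconn : (G.induce (⋃₀ T)).Connected :=
    SimpleGraph.induce_sUnion_connected_of_pairwise_not_disjoint ⟨_, hvT⟩
      (fun hs ht => ⟨v, hs.1, ht.1⟩) (fun hs => hs.2.2)
  refine ⟨⋃₀ T, ⟨⟨v, hvC⟩, hsub, hconn, ?_⟩, hvC⟩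
  intro a ha b hb hab
  -- Enlarging the union by an adjacent vertex of `U` gives another member of `T`.
  refine ⟨⋃₀ T ∪ {a, b}, ⟨Or.inl hvC, ?_, ?_⟩, by simp⟩
  · rintro x (hx | rfl | rfl)
    exacts [hsub hx, hsub ha, hb]
  · exact SimpleGraph.induce_union_connected hconn.preconnected
      (SimpleGraph.induce_pair_connected_of_adj hab).preconnected ⟨a, ha, by simp⟩

/-- for incomparable bottlenecks `S, S'`, with `H` the unique component
of `G - S` with `S' ⊆ S ∪ H`, there is exactly one component `C` of `G - S'`
containing `S ∖ S'` and all `S`-branches other than `H`; moreover every `S'`-branch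
except possibly `C` is contained in `H`. -/
theorem stmt7 [Fintype V] (k : ℕ) (hk : 1 ≤ k) (G : SimpleGraph V)
    (hdec : ∃ (l : ℕ) (X : ℕ → Set V),
      IsPathDecomp G l X ∧ ∀ i < l, (X i).ncard ≤ k)
    (S S' : Set V) (hS : IsBottleneck G k S) (hS' : IsBottleneck G k S')
    (hns : ¬ S' ⊆ S) (hns' : ¬ S ⊆ S')
    (H : Set V) (hH : IsCompOf G S H ∧ S' ⊆ S ∪ H)
    (hHuniq : ∀ H'' : Set V, IsCompOf G S H'' ∧ S' ⊆ S ∪ H'' → H'' = H) :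
    ∃ C : Set V,
      (IsCompOf G S' C ∧
        (S \ S') ∪ {v | ∃ H' : Set V, IsBranch G S H' ∧ H' ≠ H ∧ v ∈ H'} ⊆ C) ∧
      (∀ C' : Set V,
        IsCompOf G S' C' ∧
          (S \ S') ∪ {v | ∃ H' : Set V, IsBranch G S H' ∧ H' ≠ H ∧ v ∈ H'} ⊆ C' →
        C' = C) ∧
      ∀ B : Set V, IsBranch G S' B → B ≠ C → B ⊆ H := by
  have h1 : 1 < {C : Set V | IsBranch G S C}.ncard := by have := hS.2; omega
  obtain ⟨H₀, hH₀, hH₀ne⟩ := Set.exists_ne_of_one_lt_ncard h1 H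
  obtain ⟨s₀, hs₀S, hs₀S'⟩ := Set.not_subset.1 hns'
  obtain ⟨t₀, ht₀S', ht₀S⟩ := Set.not_subset.1 hns
  have ht₀H : t₀ ∈ H := (hH.2 ht₀S').resolve_left ht₀S
  have hdisj : ∀ H' : Set V, IsBranch G S H' → H' ≠ H → H' ⊆ S'ᶜ := by
    intro H' hH' hne x hx hxS'
    rcases hH.2 hxS' with hxS | hxH
    · exact hH'.1.2.1 hx hxS
    · exact hne (IsCompIn.eq_of_inter_nonempty hH.1 hH'.1 ⟨x, hx, hxH⟩)
  have hnbr : ∀ {R B : Set V}, IsBranch G R B → ∀ s ∈ R, ∃ u ∈ B, G.Adj u s :=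
    fun hB s hs => (hB.2.symm ▸ hs : s ∈ nbhdSet G _).2
  obtain ⟨C, hC, hs₀C⟩ := exists_isCompIn G (U := S'ᶜ) hs₀S'
  have hbr : ∀ H' : Set V, IsBranch G S H' → H' ≠ H → H' ⊆ C := by
    intro H' hH' hne
    obtain ⟨u, hu, hus⟩ := hnbr hH' s₀ hs₀S
    exact hC.subset_of_connected (hdisj H' hH' hne) hH'.1.2.2.1
      ⟨u, hu, hC.2.2.2 s₀ hs₀C u (hdisj H' hH' hne hu) hus.symm⟩
  have hSC : S \ S' ⊆ C := by
    rintro s ⟨hs, hs'⟩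
    obtain ⟨u, hu, hus⟩ := hnbr hH₀ s hs
    exact hC.2.2.2 u (hbr H₀ hH₀ hH₀ne hu) s hs' hus
  refine ⟨C, ⟨hC, ?_⟩, ?_, ?_⟩
  · rintro v (hv | ⟨H', hH', hne, hv⟩)
    exacts [hSC hv, hbr H' hH' hne hv]
  · rintro C' ⟨hC', hsub⟩
    exact hC.eq_of_inter_nonempty hC' ⟨s₀, hsub (Or.inl ⟨hs₀S, hs₀S'⟩), hs₀C⟩
  · intro B hB hne
    have hBS : B ⊆ Sᶜ := fun x hx hxS =>
      hne (hC.eq_of_inter_nonempty hB.1 ⟨x, hx, hSC ⟨hxS, hB.1.2.1 hx⟩⟩)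
    obtain ⟨u, hu, hut⟩ := hnbr hB t₀ ht₀S'
    exact IsCompIn.subset_of_connected hH.1 hBS hB.1.2.2.1
      ⟨u, hu, hH.1.2.2.2 t₀ ht₀H u (hBS hu) hut.symm⟩
end
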